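/- For every probabilistic finite automaton P, the reduction POMDP G with target set T={target} satisfies the following dichotomy: optCost in G equals -∞ if some finite word is accepted by P with probability strictly greater than 1/2, and optCost equals 1 otherwise. In particular, optCost ∈ {-∞, 1} for every POMDP arising from the reduction. -/

import Mathlib

open Finset Filter
open scoped Classical

set_option linter.unusedSectionVars false
set_option linter.unnecessarySeqFocus false

noncomputable section

/-- A finite history of a play: the current state together with the
(reversed) list of past steps; an entry `(a, s')` means: the action `a`
was taken from the state `s'` (leading to the next recorded state). -/
abbrev Hist (S A : Type) := S × List (A × S)

/-- The observation–action sequence of a history. -/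
def obsHist {S A Z : Type} (O : S → Z) (h : Hist S A) : Z × List (A × Z) :=
  (O h.1, h.2.map fun p => (p.1, O p.2))

/-- An observation-based (randomized, history-dependent) strategy. -/
structure Strategy (S A Z : Type) [Fintype A] (O : S → Z) where
  act : Hist S A → A → ℝ
  act_nonneg : ∀ h a, 0 ≤ act h a
  act_sum : ∀ h, ∑ a, act h a = 1
  obsBased : ∀ h h', obsHist O h = obsHist O h' → act h = act h'

/-- A partially observable Markov decision process. -/
structure POMDP (S A Z : Type) [Fintype S] [Fintype A] [Fintype Z] where
  δ : S → A → S → ℝ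
  δ_nonneg : ∀ s a s', 0 ≤ δ s a s'
  δ_sum : ∀ s a, ∑ s', δ s a s' = 1
  obs : S → Z
  init : S → ℝ
  init_nonneg : ∀ s, 0 ≤ init s
  init_sum : ∑ s, init s = 1
  init_obs : ∀ s s', 0 < init s → 0 < init s' → obs s = obs s'

namespace POMDP

variable {S A Z : Type} [Fintype S] [Fintype A] [Fintype Z]

/-- The target set `T` consists of absorbing states. -/
def Absorbing (M : POMDP S A Z) (T : Set S) : Prop :=
  ∀ t ∈ T, ∀ a, M.δ t a t = 1

/-- Probability that after `n` steps the process has followed exactly the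
history `(s, l)` (so `l` has length `n`). -/
def hprobAux (M : POMDP S A Z) (σ : Strategy S A Z M.obs) : ℕ → S → List (A × S) → ℝ
  | 0, s, l => if l = [] then M.init s else 0
  | n+1, s, l =>
    match l with
    | [] => 0
    | (a, s') :: rest => hprobAux M σ n s' rest * σ.act (s', rest) a * M.δ s' a s

def hprob (M : POMDP S A Z) (σ : Strategy S A Z M.obs) (n : ℕ) (h : Hist S A) : ℝ :=
  M.hprobAux σ n h.1 h.2

/-- The state sequence of a history visits the set `T`. -/
def visitsT (T : Set S) (h : Hist S A) : Prop :=
  h.1 ∈ T ∨ ∃ p ∈ h.2, p.2 ∈ T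

/-- Probability of reaching `T` within the first `n` steps. -/
def probReachBy (M : POMDP S A Z) (T : Set S) (σ : Strategy S A Z M.obs) (n : ℕ) : ℝ :=
  ∑' h : Hist S A, if visitsT T h then M.hprob σ n h else 0

/-- Probability of the reachability objective `Reach(T)`. -/
def probReach (M : POMDP S A Z) (T : Set S) (σ : Strategy S A Z M.obs) : ℝ :=
  ⨆ n, M.probReachBy T σ n

/-- The strategy `σ` is almost-sure winning for `Reach(T)`. -/
def AlmostSure (M : POMDP S A Z) (T : Set S) (σ : Strategy S A Z M.obs) : Prop :=
  M.probReach T σ = 1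

/-- Accumulated cost along a history. -/
def totalCostAux (c : S → A → ℝ) : S → List (A × S) → ℝ
  | _, [] => 0
  | _, (a, s') :: rest => totalCostAux c s' rest + c s' a

def totalCostH (c : S → A → ℝ) (h : Hist S A) : ℝ := totalCostAux c h.1 h.2

/-- Expected total cost of the first `n` steps, i.e. `E[Total_{n-1}]`
(in particular `E[Total_k] = expTotalSteps M c σ (k+1)`). -/
def expTotalSteps (M : POMDP S A Z) (c : S → A → ℝ) (σ : Strategy S A Z M.obs) (n : ℕ) : ℝ :=
  ∑' h : Hist S A, M.hprob σ n h * totalCostH c h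

/-- The value `Val(σ) = E[Total]` of a strategy, as the limit (limsup) of the
expected costs of the finite prefixes. -/
def Val (M : POMDP S A Z) (c : S → A → ℝ) (σ : Strategy S A Z M.obs) : EReal :=
  Filter.limsup (fun n => ((M.expTotalSteps c σ n : ℝ) : EReal)) Filter.atTop

/-- `optCost`: the infimum of the values of almost-sure winning strategies. -/
def optCost (M : POMDP S A Z) (T : Set S) (c : S → A → ℝ) : EReal :=
  ⨅ σ : {σ : Strategy S A Z M.obs // M.AlmostSure T σ}, M.Val c σ.1

end POMDP

/-- A probabilistic finite automaton. -/
structure PFA (S A : Type) [Fintype S] [Fintype A] where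
  δ : S → A → S → ℝ
  δ_nonneg : ∀ s a s', 0 ≤ δ s a s'
  δ_sum : ∀ s a, ∑ s', δ s a s' = 1
  final : Finset S
  s0 : S

def dirac {X : Type} [DecidableEq X] (x : X) : X → ℝ := fun y => if y = x then 1 else 0

lemma dirac_nonneg {X : Type} [DecidableEq X] (x y : X) : 0 ≤ dirac x y := by
  unfold dirac; split_ifs <;> norm_num

lemma dirac_sum {X : Type} [Fintype X] [DecidableEq X] (x : X) : ∑ y, dirac x y = 1 := by
  simp [dirac]

namespace PFA

variable {S A : Type} [Fintype S] [Fintype A] [DecidableEq S] [DecidableEq A]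

/-- One step of the forward distribution of the PFA. -/
def stepD (P : PFA S A) (d : S → ℝ) (a : A) : S → ℝ := fun s' => ∑ s, d s * P.δ s a s'

/-- Distribution over states after reading the word `w` from `s0`. -/
def wordDist (P : PFA S A) (w : List A) : S → ℝ := w.foldl P.stepD (dirac P.s0)

/-- Probability that the word `w` is accepted (run ends in a final state). -/
def accProb (P : PFA S A) (w : List A) : ℝ := ∑ s ∈ P.final, P.wordDist w s

/-- States of the reduction POMDP: `(s,1)` = `inl (s, true)`, `(s,-1)` = `inl (s, false)`,
`good`, `bad`, `target`, `losing` = `inr 0,1,2,3`. -/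
abbrev RSt (S : Type) := S × Bool ⊕ Fin 4

/-- Actions of the reduction POMDP: the PFA letters, and `# = inr 0`,
`$ = inr 1`, `√ = inr 2`. -/
abbrev RAct (A : Type) := A ⊕ Fin 3

variable (S) in
def stGood : RSt S := Sum.inr 0
variable (S) in
def stBad : RSt S := Sum.inr 1
variable (S) in
def stTarget : RSt S := Sum.inr 2
variable (S) in
def stLosing : RSt S := Sum.inr 3

def embedPos (p : S → ℝ) : RSt S → ℝ
  | Sum.inl (s, true) => p s
  | Sum.inl (_, false) => 0
  | Sum.inr _ => 0

lemma embedPos_nonneg {p : S → ℝ} (hp : ∀ s, 0 ≤ p s) (t : RSt S) : 0 ≤ embedPos p t := by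
  rcases t with ⟨s, _ | _⟩ | i <;> simp [embedPos] <;> exact hp s

lemma embedPos_sum (p : S → ℝ) : ∑ t, embedPos p t = ∑ s, p s := by
  rw [Fintype.sum_sum_type, Fintype.sum_prod_type]
  have h1 : ∀ s : S, ∑ b : Bool, embedPos p (Sum.inl (s, b)) = p s := by
    intro s; rw [Fintype.sum_bool]; simp [embedPos]
  have h2 : ∑ i : Fin 4, embedPos p (Sum.inr i) = 0 := by
    simp [embedPos]
  rw [h2, Finset.sum_congr rfl fun s _ => h1 s, add_zero]

/-- Transition function of the reduction POMDP. -/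
def redδ (P : PFA S A) : RSt S → RAct A → RSt S → ℝ
  | Sum.inl (s, true), Sum.inr j =>
      if j = 1 then dirac (Sum.inl (s, false))
      else if j = 2 then (if s = P.s0 then dirac (stTarget S) else dirac (stLosing S))
      else dirac (stLosing S)
  | Sum.inl (_, true), Sum.inl _ => dirac (stLosing S)
  | Sum.inl (s, false), Sum.inl a => embedPos (P.δ s a)
  | Sum.inl (s, false), Sum.inr j =>
      if j = 0 then (if s ∈ P.final then dirac (stGood S) else dirac (stBad S))
      else dirac (stLosing S)
  | Sum.inr i, Sum.inl _ =>
      if i = 2 then dirac (stTarget S) else dirac (stLosing S)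
  | Sum.inr i, Sum.inr j =>
      if i = 2 then dirac (stTarget S)
      else if i = 3 then dirac (stLosing S)
      else if j = 0 then dirac (Sum.inl (P.s0, true)) else dirac (stLosing S)

lemma redδ_nonneg (P : PFA S A) (st : RSt S) (act : RAct A) (t : RSt S) :
    0 ≤ redδ P st act t := by
  rcases st with ⟨s, _ | _⟩ | i <;> rcases act with a | j <;>
    simp only [redδ] <;> (try split_ifs) <;>
    first
      | exact dirac_nonneg _ _
      | exact embedPos_nonneg (P.δ_nonneg s a) t

lemma redδ_sum (P : PFA S A) (st : RSt S) (act : RAct A) :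
    ∑ t, redδ P st act t = 1 := by
  rcases st with ⟨s, _ | _⟩ | i <;> rcases act with a | j <;>
    simp only [redδ] <;> (try split_ifs) <;>
    first
      | exact dirac_sum _
      | (rw [embedPos_sum]; exact P.δ_sum s a)

/-- The cost function of the reduction POMDP (cost of the source state,
charged on all outgoing transitions). -/
def costRed : RSt S → RAct A → ℝ
  | Sum.inl (_, true), _ => 1
  | Sum.inl (_, false), _ => -1
  | Sum.inr i, _ => if i = 0 then -1 else if i = 1 then 1 else if i = 3 then 1 else 0

/-- The reduction POMDP built from the PFA `P`: single observation,
initial state `(s0, 1)`. -/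
def redPOMDP (P : PFA S A) : POMDP (RSt S) (RAct A) Unit where
  δ := redδ P
  δ_nonneg := redδ_nonneg P
  δ_sum := redδ_sum P
  obs := fun _ => ()
  init := dirac (Sum.inl (P.s0, true))
  init_nonneg := dirac_nonneg _
  init_sum := dirac_sum _
  init_obs := fun _ _ _ _ => rfl

variable (S) in
/-- The target set of the reduction POMDP. -/
def TRed : Set (RSt S) := {stTarget S}

end PFA

/-- The memory state of a finite-memory strategy after a history. -/
def memAfter {S A Z Mem : Type} (O : S → Z) (σu : Mem → Z → A → Mem) (m0 : Mem) :
    S → List (A × S) → Mem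
  | _, [] => m0
  | s, (a, s') :: rest => σu (memAfter O σu m0 s' rest) (O s) a

/-- A strategy is pure finite-memory if it is induced by a deterministic
finite-memory structure `(σu, σn, Mem, m0)`. -/
def IsPureFinMem {S A Z : Type} [Fintype A] (O : S → Z) (σ : Strategy S A Z O) : Prop :=
  ∃ (Mem : Type) (_ : Finite Mem) (σu : Mem → Z → A → Mem) (σn : Mem → A) (m0 : Mem),
    ∀ (h : Hist S A) (a : A),
      σ.act h a = if a = σn (memAfter O σu m0 h.1 h.2) then 1 else 0


namespace RedAux

section general

variable {S A : Type} [Fintype S] [Fintype A]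

/-- Actions of a history (latest first). -/
def acts (h : Hist S A) : List A := h.2.map Prod.fst

/-- Backward one-step operator for a fixed action. -/
def stepF (M : POMDP S A Unit) (a : A) (G : Hist S A → ℝ) : Hist S A → ℝ :=
  fun h => ∑ s', M.δ h.1 a s' * G (s', (a, h.1) :: h.2)

/-- Expectation of `G` when the (reversed) action word `u` is played. -/
def D (M : POMDP S A Unit) : List A → (Hist S A → ℝ) → ℝ
  | [], G => ∑ s, M.init s * G (s, [])
  | a :: u, G => D M u (stepF M a G)

/-- Average over action words of length `n`. -/
def W (τ : List A → A → ℝ) : ℕ → (List A → ℝ) → ℝ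
  | 0, f => f []
  | n+1, f => W τ n (fun u => ∑ a, τ u a * f (a :: u))

lemma D_sum (M : POMDP S A Unit) {ι : Type} (I : Finset ι) (u : List A)
    (G : ι → Hist S A → ℝ) :
    D M u (fun h => ∑ i ∈ I, G i h) = ∑ i ∈ I, D M u (G i) := by
  induction u generalizing G with
  | nil =>
    simp only [D, Finset.mul_sum]
    rw [Finset.sum_comm]
  | cons a u ih =>
    simp only [D]
    rw [← ih]
    congr 1
    funext h
    simp only [stepF, Finset.mul_sum]
    rw [Finset.sum_comm]

lemma D_add (M : POMDP S A Unit) (u : List A) (G H : Hist S A → ℝ) :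
    D M u (fun h => G h + H h) = D M u G + D M u H := by
  induction u generalizing G H with
  | nil => simp only [D, mul_add, Finset.sum_add_distrib]
  | cons a u ih =>
    simp only [D]
    rw [← ih]
    congr 1
    funext h
    simp only [stepF, mul_add, Finset.sum_add_distrib]

lemma D_mul (M : POMDP S A Unit) (u : List A) (φ : List A → ℝ) (G : Hist S A → ℝ) :
    D M u (fun h => φ (acts h) * G h) = φ u * D M u G := by
  induction u generalizing φ G with
  | nil =>
    simp only [D, Finset.mul_sum, acts, List.map_nil]
    exact Finset.sum_congr rfl fun s _ => by ring
  | cons a u ih =>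
    simp only [D]
    rw [← ih (fun v => φ (a :: v))]
    congr 1
    funext h
    simp only [stepF, Finset.mul_sum, acts, List.map_cons]
    exact Finset.sum_congr rfl fun s _ => by ring

lemma D_mono (M : POMDP S A Unit) (u : List A) (G H : Hist S A → ℝ) (hGH : ∀ h, G h ≤ H h) :
    D M u G ≤ D M u H := by
  induction u generalizing G H with
  | nil =>
    exact Finset.sum_le_sum fun s _ => mul_le_mul_of_nonneg_left (hGH _) (M.init_nonneg s)
  | cons a u ih =>
    exact ih _ _ fun h =>
      Finset.sum_le_sum fun s _ => mul_le_mul_of_nonneg_left (hGH _) (M.δ_nonneg _ _ s)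

lemma D_const (M : POMDP S A Unit) (u : List A) (c : ℝ) : D M u (fun _ => c) = c := by
  induction u with
  | nil => simp only [D, ← Finset.sum_mul, M.init_sum, one_mul]
  | cons a u ih =>
    simp only [D]
    have : stepF M a (fun _ => c) = fun _ => c := by
      funext h
      simp only [stepF, ← Finset.sum_mul, M.δ_sum, one_mul]
    rw [this, ih]

lemma W_mono {τ : List A → A → ℝ} (h0 : ∀ u a, 0 ≤ τ u a) (n : ℕ) (f g : List A → ℝ)
    (hfg : ∀ u, f u ≤ g u) : W τ n f ≤ W τ n g := by
  induction n generalizing f g with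
  | zero => exact hfg _
  | succ n ih =>
    exact ih _ _ fun u =>
      Finset.sum_le_sum fun a _ => mul_le_mul_of_nonneg_left (hfg _) (h0 u a)

lemma W_const {τ : List A → A → ℝ} (h1 : ∀ u, ∑ a, τ u a = 1) (n : ℕ) (c : ℝ) :
    W τ n (fun _ => c) = c := by
  induction n with
  | zero => rfl
  | succ n ih =>
    simp only [W, ← Finset.sum_mul, h1, one_mul]
    exact ih

lemma hprob_ne_zero_length (M : POMDP S A Unit) (σ : Strategy S A Unit M.obs) (n : ℕ) (s : S)
    (l : List (A × S)) (h : M.hprobAux σ n s l ≠ 0) : l.length = n := by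
  induction n generalizing s l with
  | zero =>
    by_contra hl
    apply h
    have : l ≠ [] := by
      rintro rfl; exact hl rfl
    simp [POMDP.hprobAux, this]
  | succ n ih =>
    cases l with
    | nil => exact absurd rfl h
    | cons p l =>
      obtain ⟨a, s'⟩ := p
      have := ih s' l (by
        intro h0
        apply h
        simp [POMDP.hprobAux, h0])
      simp [this]

lemma finite_hist (n : ℕ) : {h : Hist S A | h.2.length = n}.Finite := by
  have : {h : Hist S A | h.2.length = n} = (Set.univ : Set S) ×ˢ {l : List (A × S) | l.length = n} := by
    ext h; simp
  rw [this]
  exact Set.finite_univ.prod (List.finite_length_eq _ _)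

lemma hasSum_hprob (M : POMDP S A Unit) (σ : Strategy S A Unit M.obs) (τ : List A → A → ℝ)
    (hτ : ∀ h, σ.act h = τ (acts h)) (n : ℕ) (F : Hist S A → ℝ) :
    HasSum (fun h => M.hprob σ n h * F h) (W τ n (fun u => D M u F)) := by
  induction n generalizing F with
  | zero =>
    have hinj : Function.Injective (fun s : S => ((s, []) : Hist S A)) := by
      intro a b hab; exact congrArg Prod.fst hab
    rw [← hinj.hasSum_iff]
    · have := hasSum_fintype (fun s : S => M.init s * F (s, []))
      simpa [W, D, Function.comp_def, POMDP.hprob, POMDP.hprobAux] using this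
    · rintro ⟨s, l⟩ hx
      have : l ≠ [] := by
        rintro rfl; exact hx ⟨s, rfl⟩
      simp [POMDP.hprob, POMDP.hprobAux, this]
  | succ n ih =>
    let g : Hist S A × (A × S) → Hist S A := fun p => (p.2.2, (p.2.1, p.1.1) :: p.1.2)
    have hinj : Function.Injective g := by
      rintro ⟨⟨s, l⟩, a, s'⟩ ⟨⟨t, m⟩, b, t'⟩ hab
      simp only [g, Prod.mk.injEq, List.cons.injEq] at hab
      obtain ⟨h1, ⟨h2, h3⟩, h4⟩ := hab
      subst h1 h2 h3 h4; rfl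
    rw [← hinj.hasSum_iff]
    · have hfin : (Function.support ((fun h => M.hprob σ (n+1) h * F h) ∘ g)).Finite := by
        apply Set.Finite.subset (Set.Finite.preimage hinj.injOn (finite_hist (S := S) (A := A) (n+1)))
        intro p hp
        apply hprob_ne_zero_length M σ (n+1) (g p).1 (g p).2
        intro h0
        apply hp
        simp [POMDP.hprob, h0]
      have hs : Summable ((fun h => M.hprob σ (n+1) h * F h) ∘ g) :=
        summable_of_hasFiniteSupport hfin
      have h2 := hs.hasSum.prod_fiberwise (fun h => hasSum_fintype _)
      have key : W τ (n+1) (fun u => D M u F)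
          = W τ n (fun u => D M u (fun h => ∑ a, ∑ s', σ.act h a * M.δ h.1 a s' * F (s', (a, h.1) :: h.2))) := by
        simp only [W]
        congr 1
        funext u
        have e : ∀ a, τ u a * D M (a :: u) F =
            D M u (fun h => ∑ s', σ.act h a * M.δ h.1 a s' * F (s', (a, h.1) :: h.2)) := by
          intro a
          simp only [D]
          rw [← D_mul M u (fun v => τ v a)]
          congr 1
          funext h
          simp only [stepF, Finset.mul_sum, hτ]
          exact Finset.sum_congr rfl fun s _ => by ring
        simp only [e]
        rw [D_sum M Finset.univ u
          (fun a h => ∑ s', σ.act h a * M.δ h.1 a s' * F (s', (a, h.1) :: h.2))]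
      have h3 := ih (fun h => ∑ a, ∑ s', σ.act h a * M.δ h.1 a s' * F (s', (a, h.1) :: h.2))
      rw [← key] at h3
      have h4 : (fun b => ∑ c, ((fun h => M.hprob σ (n+1) h * F h) ∘ g) (b, c)) =
          fun h => M.hprob σ n h * ∑ a, ∑ s', σ.act h a * M.δ h.1 a s' * F (s', (a, h.1) :: h.2) := by
        funext h
        rw [Fintype.sum_prod_type]
        simp only [Finset.mul_sum]
        refine Finset.sum_congr rfl fun a _ => Finset.sum_congr rfl fun s _ => ?_
        simp only [Function.comp, g, POMDP.hprob, POMDP.hprobAux]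
        ring
      rw [h4] at h2
      rw [h3.unique h2]
      exact hs.hasSum
    · rintro ⟨s, l⟩ hx
      cases l with
      | nil => simp [POMDP.hprob, POMDP.hprobAux]
      | cons p l =>
        obtain ⟨a, s'⟩ := p
        exact absurd ⟨((s', l), (a, s)), rfl⟩ hx

/-- Expected cost on an action word. -/
def C (M : POMDP S A Unit) (c : S → A → ℝ) (u : List A) : ℝ := D M u (POMDP.totalCostH c)

lemma C_cons (M : POMDP S A Unit) (c : S → A → ℝ) (a : A) (u : List A) :
    C M c (a :: u) = C M c u + D M u (fun h => c h.1 a) := by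
  simp only [C]
  rw [← D_add]
  simp only [D]
  congr 1
  funext h
  simp only [stepF, POMDP.totalCostH, POMDP.totalCostAux]
  rw [← Finset.sum_mul, M.δ_sum, one_mul]

lemma expTotal_eq (M : POMDP S A Unit) (c : S → A → ℝ) (σ : Strategy S A Unit M.obs)
    (τ : List A → A → ℝ) (hτ : ∀ h, σ.act h = τ (acts h)) (n : ℕ) :
    M.expTotalSteps c σ n = W τ n (C M c) :=
  (hasSum_hprob M σ τ hτ n _).tsum_eq

/-- Indicator of visiting `T`. -/
def vis (T : Set S) (h : Hist S A) : ℝ := if POMDP.visitsT T h then 1 else 0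

/-- Indicator of the current state being in `T`. -/
def cur (T : Set S) (s : S) : ℝ := if s ∈ T then 1 else 0

lemma reachBy_eq (M : POMDP S A Unit) (T : Set S) (σ : Strategy S A Unit M.obs)
    (τ : List A → A → ℝ) (hτ : ∀ h, σ.act h = τ (acts h)) (n : ℕ) :
    M.probReachBy T σ n = W τ n (fun u => D M u (vis T)) := by
  rw [← (hasSum_hprob M σ τ hτ n (vis T)).tsum_eq]
  unfold POMDP.probReachBy
  congr 1
  funext h
  simp [vis]

lemma vis_le_one (T : Set S) (h : Hist S A) : vis T h ≤ 1 := by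
  unfold vis; split_ifs <;> norm_num

lemma cur_le_vis (T : Set S) (h : Hist S A) : cur T h.1 ≤ vis T h := by
  unfold vis cur POMDP.visitsT
  split_ifs with h1 h2
  · exact le_rfl
  · exact absurd (Or.inl h1) h2
  · norm_num
  · exact le_rfl

lemma D_vis_le (M : POMDP S A Unit) (T : Set S) (habs : ∀ t ∈ T, ∀ a, ∀ s, s ∉ T → M.δ t a s = 0)
    (u : List A) : D M u (fun h => vis T h - cur T h.1) ≤ 0 := by
  induction u with
  | nil =>
    simp [D, vis, cur, POMDP.visitsT]
  | cons a u ih =>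
    refine le_trans (D_mono M u _ _ fun h => ?_) ih
    have hN : 0 ≤ vis T h - cur T h.1 := sub_nonneg.2 (cur_le_vis T h)
    have : ∀ s', M.δ h.1 a s' * (vis T (s', (a, h.1) :: h.2) - cur T s') ≤
        M.δ h.1 a s' * (vis T h - cur T h.1) := by
      intro s'
      by_cases hs : s' ∈ T
      · have : vis T (s', (a, h.1) :: h.2) - cur T s' = 0 := by
          simp [vis, cur, POMDP.visitsT, hs]
        rw [this, mul_zero]
        exact mul_nonneg (M.δ_nonneg _ _ _) hN
      · by_cases hc : h.1 ∈ T
        · rw [habs _ hc a s' hs]; simp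
        · apply le_of_eq
          congr 1
          simp [vis, cur, POMDP.visitsT, hs, hc]
    calc stepF M a (fun h => vis T h - cur T h.1) h
        ≤ ∑ s', M.δ h.1 a s' * (vis T h - cur T h.1) := Finset.sum_le_sum fun s' _ => this s'
      _ = _ := by rw [← Finset.sum_mul, M.δ_sum, one_mul]

/-- Expectation of a function of the last state. -/
def L (M : POMDP S A Unit) (u : List A) (f : S → ℝ) : ℝ := D M u (fun h => f h.1)

lemma L_cons (M : POMDP S A Unit) (a : A) (u : List A) (f : S → ℝ) :
    L M (a :: u) f = L M u (fun s => ∑ s', M.δ s a s' * f s') := rfl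

lemma D_vis_le_L (M : POMDP S A Unit) (T : Set S)
    (habs : ∀ t ∈ T, ∀ a, ∀ s, s ∉ T → M.δ t a s = 0) (u : List A) :
    D M u (vis T) ≤ L M u (cur T) := by
  have h1 := D_vis_le M T habs u
  have h2 := D_add M u (fun h => vis T h - cur T h.1) (fun h => cur T h.1)
  simp only [sub_add_cancel] at h2
  have h3 : D M u (vis T) = D M u (fun h => vis T h) := rfl
  unfold L
  linarith

lemma ofFn_rev {B : Type} (p : ℕ → B) (n : ℕ) :
    (List.ofFn (fun i : Fin (n+1) => p i)).reverse =
      p n :: (List.ofFn (fun i : Fin n => p i)).reverse := by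
  rw [List.ofFn_succ', List.concat_eq_append, List.reverse_append]
  rfl

lemma W_pure [DecidableEq A] {τ : List A → A → ℝ} (p : ℕ → A)
    (hτ : ∀ u a, τ u a = dirac (p u.length) a) (n : ℕ) (f : List A → ℝ) :
    W τ n f = f ((List.ofFn (fun i : Fin n => p i)).reverse) := by
  induction n generalizing f with
  | zero => simp [W]
  | succ n ih =>
    simp only [W]
    rw [ih]
    rw [ofFn_rev]
    simp [hτ, dirac]

end general

section red

variable {S A : Type} [Fintype S] [Fintype A] [DecidableEq S] [DecidableEq A]

open PFA

variable (P : PFA S A)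

/-- Word cost in the reduction. -/
abbrev CR (u : List (RAct A)) : ℝ := C (redPOMDP P) (costRed (S := S) (A := A)) u

abbrev LR (u : List (RAct A)) (f : RSt S → ℝ) : ℝ := L (redPOMDP P) u f

lemma CR_cons (a : RAct A) (u : List (RAct A)) :
    CR P (a :: u) = CR P u + LR P u (fun s => costRed s a) := C_cons _ _ _ _

lemma LR_cons (a : RAct A) (u : List (RAct A)) (f : RSt S → ℝ) :
    LR P (a :: u) f = LR P u (fun s => ∑ s', (redPOMDP P).δ s a s' * f s') := rfl

def IsPos (u : List (RAct A)) (w : List A) (c : ℝ) : Prop :=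
  (∀ f, LR P u f = ∑ s, P.wordDist w s * f (Sum.inl (s, true))) ∧ CR P u = c

def IsNeg (u : List (RAct A)) (w : List A) (c : ℝ) : Prop :=
  (∀ f, LR P u f = ∑ s, P.wordDist w s * f (Sum.inl (s, false))) ∧ CR P u = c

def IsEnd (u : List (RAct A)) (w : List A) (c : ℝ) : Prop :=
  (∀ f, LR P u f = P.accProb w * f (stGood S) + (1 - P.accProb w) * f (stBad S)) ∧ CR P u = c

def IsDead (u : List (RAct A)) (p q c : ℝ) : Prop :=
  (∀ f, LR P u f = p * f (stTarget S) + q * f (stLosing S)) ∧ CR P u = c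

lemma sum_dirac_mul {X : Type} [Fintype X] [DecidableEq X] (x : X) (f : X → ℝ) :
    ∑ y, dirac x y * f y = f x := by
  simp [dirac]

lemma sum_embed (p : S → ℝ) (f : RSt S → ℝ) :
    ∑ t, embedPos p t * f t = ∑ s, p s * f (Sum.inl (s, true)) := by
  rw [Fintype.sum_sum_type, Fintype.sum_prod_type]
  simp [embedPos]

lemma wd_append (w : List A) (a : A) :
    P.wordDist (w ++ [a]) = P.stepD (P.wordDist w) a := by
  simp [wordDist]

lemma wd_sum (w : List A) : ∑ s, P.wordDist w s = 1 := by
  induction w using List.reverseRecOn with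
  | nil => exact dirac_sum _
  | append_singleton w a ih =>
    rw [wd_append]
    simp only [stepD]
    rw [Finset.sum_comm]
    simp only [← Finset.mul_sum, P.δ_sum, mul_one, ih]

lemma wd_nonneg (w : List A) (s : S) : 0 ≤ P.wordDist w s := by
  induction w using List.reverseRecOn generalizing s with
  | nil => exact dirac_nonneg _ _
  | append_singleton w a ih =>
    rw [wd_append]
    exact Finset.sum_nonneg fun s' _ => mul_nonneg (ih s') (P.δ_nonneg _ _ _)

lemma isPos_nil : IsPos P [] [] 0 := by
  refine ⟨fun f => ?_, ?_⟩
  · have : LR P [] f = ∑ s, dirac (Sum.inl (P.s0, true)) s * f s := rfl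
    rw [this, sum_dirac_mul]
    exact (sum_dirac_mul P.s0 (fun s => f (Sum.inl (s, true)))).symm
  · simp [CR, C, D, POMDP.totalCostH, POMDP.totalCostAux]

lemma delta_eq (s : RSt S) (a : RAct A) : (redPOMDP P).δ s a = redδ P s a := rfl

variable {P}

lemma IsPos.dollar {u : List (RAct A)} {w c} (h : IsPos P u w c) :
    IsNeg P (Sum.inr 1 :: u) w (c + 1) := by
  refine ⟨fun f => ?_, ?_⟩
  · rw [LR_cons, h.1]
    simp [delta_eq, redδ, sum_dirac_mul]
  · rw [CR_cons, h.1, h.2]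
    simp [costRed, wd_sum]

lemma IsPos.letter {u : List (RAct A)} {w c} (h : IsPos P u w c) (a : A) :
    IsDead P (Sum.inl a :: u) 0 1 (c + 1) := by
  refine ⟨fun f => ?_, ?_⟩
  · rw [LR_cons, h.1]
    simp [delta_eq, redδ, sum_dirac_mul, ← Finset.sum_mul, wd_sum]
  · rw [CR_cons, h.1, h.2]
    simp [costRed, wd_sum]

lemma IsPos.hash {u : List (RAct A)} {w c} (h : IsPos P u w c) :
    IsDead P (Sum.inr 0 :: u) 0 1 (c + 1) := by
  refine ⟨fun f => ?_, ?_⟩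
  · rw [LR_cons, h.1]
    simp [delta_eq, redδ, sum_dirac_mul, ← Finset.sum_mul, wd_sum]
  · rw [CR_cons, h.1, h.2]
    simp [costRed, wd_sum]

lemma IsPos.root {u : List (RAct A)} {w c} (h : IsPos P u w c) :
    IsDead P (Sum.inr 2 :: u) (P.wordDist w P.s0) (1 - P.wordDist w P.s0) (c + 1) := by
  refine ⟨fun f => ?_, ?_⟩
  · rw [LR_cons, h.1]
    have e : ∀ s, P.wordDist w s * ∑ s', (redPOMDP P).δ (Sum.inl (s, true)) (Sum.inr 2) s' * f s'
        = P.wordDist w s * f (stLosing S) +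
          (if s = P.s0 then P.wordDist w s * (f (stTarget S) - f (stLosing S)) else 0) := by
      intro s
      by_cases hs : s = P.s0
      · simp [delta_eq, redδ, sum_dirac_mul, hs]; ring
      · simp [delta_eq, redδ, sum_dirac_mul, hs]
    rw [Finset.sum_congr rfl fun s _ => e s, Finset.sum_add_distrib, ← Finset.sum_mul, wd_sum]
    simp
    ring
  · rw [CR_cons, h.1, h.2]
    simp [costRed, wd_sum]

lemma IsNeg.letter {u : List (RAct A)} {w c} (h : IsNeg P u w c) (a : A) :
    IsPos P (Sum.inl a :: u) (w ++ [a]) (c - 1) := by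
  refine ⟨fun f => ?_, ?_⟩
  · rw [LR_cons, h.1]
    simp only [delta_eq, redδ, sum_embed, wd_append, stepD, Finset.sum_mul, Finset.mul_sum]
    rw [Finset.sum_comm]
    exact Finset.sum_congr rfl fun s _ => Finset.sum_congr rfl fun s _ => by ring
  · rw [CR_cons, h.1, h.2]
    simp [costRed, wd_sum]
    ring

lemma IsNeg.hash {u : List (RAct A)} {w c} (h : IsNeg P u w c) :
    IsEnd P (Sum.inr 0 :: u) w (c - 1) := by
  refine ⟨fun f => ?_, ?_⟩
  · rw [LR_cons, h.1]
    have e : ∀ s, P.wordDist w s * ∑ s', (redPOMDP P).δ (Sum.inl (s, false)) (Sum.inr 0) s' * f s'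
        = P.wordDist w s * f (stBad S) +
          (if s ∈ P.final then P.wordDist w s * (f (stGood S) - f (stBad S)) else 0) := by
      intro s
      by_cases hs : s ∈ P.final
      · simp [delta_eq, redδ, sum_dirac_mul, hs]; ring
      · simp [delta_eq, redδ, sum_dirac_mul, hs]
    rw [Finset.sum_congr rfl fun s _ => e s, Finset.sum_add_distrib, ← Finset.sum_mul, wd_sum]
    simp only [Finset.sum_ite_mem, Finset.univ_inter, accProb, ← Finset.sum_mul]
    ring
  · rw [CR_cons, h.1, h.2]
    simp [costRed, wd_sum]
    ring

lemma IsNeg.other {u : List (RAct A)} {w c} (h : IsNeg P u w c) (j : Fin 3) (hj : j ≠ 0) :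
    IsDead P (Sum.inr j :: u) 0 1 (c - 1) := by
  refine ⟨fun f => ?_, ?_⟩
  · rw [LR_cons, h.1]
    simp [delta_eq, redδ, sum_dirac_mul, ← Finset.sum_mul, wd_sum, hj]
  · rw [CR_cons, h.1, h.2]
    simp [costRed, wd_sum]
    ring

lemma IsEnd.hash {u : List (RAct A)} {w c} (h : IsEnd P u w c) :
    IsPos P (Sum.inr 0 :: u) [] (c + (1 - 2 * P.accProb w)) := by
  refine ⟨fun f => ?_, ?_⟩
  · rw [LR_cons, h.1]
    have := sum_dirac_mul P.s0 (fun s => f (Sum.inl (s, true)))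
    simp only [wordDist, List.foldl_nil, this]
    simp [delta_eq, redδ, sum_dirac_mul, stGood, stBad]
    ring
  · rw [CR_cons, h.1, h.2]
    simp [costRed, stGood, stBad]
    ring

lemma IsEnd.other {u : List (RAct A)} {w c} (h : IsEnd P u w c) (a : RAct A)
    (ha : a ≠ Sum.inr 0) :
    IsDead P (a :: u) 0 1 (c + (1 - 2 * P.accProb w)) := by
  refine ⟨fun f => ?_, ?_⟩
  · rw [LR_cons, h.1]
    rcases a with a | j
    · simp [delta_eq, redδ, sum_dirac_mul, stGood, stBad]
      ring
    · have hj : j ≠ 0 := by rintro rfl; exact ha rfl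
      simp [delta_eq, redδ, sum_dirac_mul, stGood, stBad, hj]
      ring
  · rw [CR_cons, h.1, h.2]
    simp [costRed, stGood, stBad]
    ring

lemma IsDead.any {u : List (RAct A)} {p q c} (h : IsDead P u p q c) (a : RAct A) :
    IsDead P (a :: u) p q (c + q) := by
  refine ⟨fun f => ?_, ?_⟩
  · rw [LR_cons, h.1]
    rcases a with a | j <;>
    simp [delta_eq, redδ, sum_dirac_mul, stTarget, stLosing]
  · rw [CR_cons, h.1, h.2]
    simp [costRed, stTarget, stLosing]

variable (P)

lemma wd_le_one (w : List A) (s : S) : P.wordDist w s ≤ 1 := by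
  rw [← wd_sum P w]
  exact Finset.single_le_sum (fun s _ => wd_nonneg P w s) (Finset.mem_univ s)

lemma inv (hP : ∀ w, P.accProb w ≤ 1 / 2) (u : List (RAct A)) :
    (∃ w c, 0 ≤ c ∧ IsPos P u w c) ∨ (∃ w c, 1 ≤ c ∧ IsNeg P u w c) ∨
    (∃ w c, 0 ≤ c ∧ IsEnd P u w c) ∨ (∃ p q c, p ≤ c ∧ 0 ≤ q ∧ IsDead P u p q c) := by
  induction u with
  | nil => exact Or.inl ⟨[], 0, le_rfl, isPos_nil P⟩
  | cons a u ih =>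
    rcases ih with ⟨w, c, hc, h⟩ | ⟨w, c, hc, h⟩ | ⟨w, c, hc, h⟩ | ⟨p, q, c, hc, hq, h⟩
    · rcases a with a | j
      · exact Or.inr (Or.inr (Or.inr ⟨_, _, _, by linarith, zero_le_one, h.letter a⟩))
      · fin_cases j
        · exact Or.inr (Or.inr (Or.inr ⟨_, _, _, by linarith, zero_le_one, h.hash⟩))
        · exact Or.inr (Or.inl ⟨_, _, by linarith, h.dollar⟩)
        · have := wd_le_one P w P.s0
          exact Or.inr (Or.inr (Or.inr ⟨_, _, _, by linarith, by linarith, h.root⟩))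
    · rcases a with a | j
      · exact Or.inl ⟨_, _, by linarith, h.letter a⟩
      · by_cases hj : j = 0
        · subst hj
          exact Or.inr (Or.inr (Or.inl ⟨_, _, by linarith, h.hash⟩))
        · exact Or.inr (Or.inr (Or.inr ⟨_, _, _, by linarith, zero_le_one, h.other j hj⟩))
    · have := hP w
      by_cases ha : a = Sum.inr 0
      · subst ha
        exact Or.inl ⟨_, _, by linarith, h.hash⟩
      · exact Or.inr (Or.inr (Or.inr ⟨_, _, _, by linarith, zero_le_one, h.other a ha⟩))
    · exact Or.inr (Or.inr (Or.inr ⟨_, _, _, by linarith, hq, h.any a⟩))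

lemma cur_le_cost (hP : ∀ w, P.accProb w ≤ 1 / 2) (u : List (RAct A)) :
    LR P u (cur (TRed S)) ≤ CR P u := by
  rcases inv P hP u with ⟨w, c, hc, h⟩ | ⟨w, c, hc, h⟩ | ⟨w, c, hc, h⟩ | ⟨p, q, c, hc, hq, h⟩
  · rw [h.1, h.2]; simpa [cur, TRed, stTarget] using hc
  · rw [h.1, h.2]; simp [cur, TRed, stTarget]; linarith
  · rw [h.1, h.2]; simpa [cur, TRed, stTarget, stGood, stBad] using hc
  · rw [h.1, h.2]; simpa [cur, TRed, stTarget, stLosing] using hc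

lemma absorb : ∀ t ∈ TRed S, ∀ a, ∀ s, s ∉ TRed S → (redPOMDP P).δ t a s = 0 := by
  intro t ht a s hs
  have ht : t = stTarget S := ht
  subst ht
  have hs : s ≠ Sum.inr 2 := hs
  rcases a with a | j <;> simp [delta_eq, redδ, stTarget, dirac, hs]

/-- The action-word form of a strategy. -/
def toTau (σ : Strategy (RSt S) (RAct A) Unit (redPOMDP P).obs) (u : List (RAct A)) :
    RAct A → ℝ := σ.act (stTarget S, u.map fun a => (a, stTarget S))

lemma toTau_spec (σ : Strategy (RSt S) (RAct A) Unit (redPOMDP P).obs)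
    (h : Hist (RSt S) (RAct A)) : σ.act h = toTau P σ (acts h) := by
  apply σ.obsBased
  simp [obsHist, acts, Function.comp_def]

lemma reachBy_le_one (σ : Strategy (RSt S) (RAct A) Unit (redPOMDP P).obs) (n : ℕ) :
    (redPOMDP P).probReachBy (TRed S) σ n ≤ 1 := by
  rw [reachBy_eq _ _ σ _ (toTau_spec P σ)]
  rw [← W_const (τ := toTau P σ) (fun u => σ.act_sum _) n 1]
  refine W_mono (fun u a => σ.act_nonneg _ _) n _ _ fun u => ?_
  rw [← D_const (redPOMDP P) u 1]
  exact D_mono _ _ _ _ fun h => vis_le_one _ _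

lemma reachBy_le_exp (hP : ∀ w, P.accProb w ≤ 1 / 2)
    (σ : Strategy (RSt S) (RAct A) Unit (redPOMDP P).obs) (n : ℕ) :
    (redPOMDP P).probReachBy (TRed S) σ n ≤ (redPOMDP P).expTotalSteps costRed σ n := by
  rw [reachBy_eq _ _ σ _ (toTau_spec P σ), expTotal_eq _ _ σ _ (toTau_spec P σ)]
  refine W_mono (fun u a => σ.act_nonneg _ _) n _ _ fun u => ?_
  exact (D_vis_le_L _ _ (absorb P) u).trans (cur_le_cost P hP u)

lemma reachBy_mono (σ : Strategy (RSt S) (RAct A) Unit (redPOMDP P).obs) :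
    Monotone ((redPOMDP P).probReachBy (TRed S) σ) := by
  refine monotone_nat_of_le_succ fun n => ?_
  rw [reachBy_eq _ _ σ _ (toTau_spec P σ), reachBy_eq _ _ σ _ (toTau_spec P σ)]
  simp only [W]
  refine W_mono (fun u a => σ.act_nonneg _ _) n _ _ fun u => ?_
  have : ∀ a, D (redPOMDP P) u (vis (TRed S)) ≤ D (redPOMDP P) (a :: u) (vis (TRed S)) := by
    intro a
    refine D_mono _ _ _ _ fun h => ?_
    have e : vis (TRed S) h = ∑ s', (redPOMDP P).δ h.1 a s' * vis (TRed S) h := by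
      rw [← Finset.sum_mul, POMDP.δ_sum, one_mul]
    rw [e]
    refine Finset.sum_le_sum fun s' _ => mul_le_mul_of_nonneg_left ?_ (POMDP.δ_nonneg _ _ _ _)
    unfold vis POMDP.visitsT
    split_ifs with h1 h2
    · exact le_rfl
    · exfalso
      apply h2
      rcases h1 with h1 | ⟨p, hp, hpT⟩
      · exact Or.inr ⟨(a, h.1), by simp, h1⟩
      · exact Or.inr ⟨p, by simp [hp], hpT⟩
    · norm_num
    · exact le_rfl
  calc D (redPOMDP P) u (vis (TRed S))
      = ∑ a, toTau P σ u a * D (redPOMDP P) u (vis (TRed S)) := by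
        rw [← Finset.sum_mul]
        have : ∑ a, toTau P σ u a = 1 := σ.act_sum _
        rw [this, one_mul]
    _ ≤ _ := Finset.sum_le_sum fun a _ => mul_le_mul_of_nonneg_left (this a) (σ.act_nonneg _ _)

lemma one_le_val (hP : ∀ w, P.accProb w ≤ 1 / 2)
    (σ : Strategy (RSt S) (RAct A) Unit (redPOMDP P).obs)
    (hσ : (redPOMDP P).AlmostSure (TRed S) σ) :
    (1 : EReal) ≤ (redPOMDP P).Val costRed σ := by
  have hb : BddAbove (Set.range ((redPOMDP P).probReachBy (TRed S) σ)) :=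
    ⟨1, by rintro _ ⟨n, rfl⟩; exact reachBy_le_one P σ n⟩
  have ht := tendsto_atTop_ciSup (reachBy_mono P σ) hb
  have h1 : (⨆ n, (redPOMDP P).probReachBy (TRed S) σ n) = 1 := hσ
  rw [h1] at ht
  have ht' : Filter.Tendsto (fun n => (((redPOMDP P).probReachBy (TRed S) σ n : ℝ) : EReal))
      Filter.atTop (nhds ((1 : ℝ) : EReal)) :=
    (continuous_coe_real_ereal.tendsto 1).comp ht
  have := ht'.limsup_eq
  rw [← EReal.coe_one, ← this]
  refine Filter.limsup_le_limsup (Filter.Eventually.of_forall fun n => ?_)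
  exact EReal.coe_le_coe_iff.2 (reachBy_le_exp P hP σ n)

/-- Pure strategy playing the action sequence `p`. -/
def pureStrat (p : ℕ → RAct A) : Strategy (RSt S) (RAct A) Unit (redPOMDP P).obs where
  act h a := if a = p h.2.length then 1 else 0
  act_nonneg h a := by split_ifs <;> norm_num
  act_sum h := by simp
  obsBased h h' e := by
    have := congrArg (fun x => x.2.length) e
    simp only [obsHist, List.length_map] at this
    rw [this]

lemma exists_strategy {u : List (RAct A)} {c : ℝ} (h : IsDead P u 1 0 c) :
    ∃ σ, (redPOMDP P).AlmostSure (TRed S) σ ∧ (redPOMDP P).Val costRed σ = (c : EReal) := by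
  let p : ℕ → RAct A := fun n => u.reverse.getD n (Sum.inr 2)
  let τ : List (RAct A) → RAct A → ℝ := fun v a => if a = p v.length then 1 else 0
  have hτ : ∀ h, (pureStrat P p).act h = τ (acts h) := by
    intro h; funext a; simp [pureStrat, τ, acts]
  have hτp : ∀ u a, τ u a = dirac (p u.length) a := by
    intro u a
    by_cases h : a = p u.length <;> simp [τ, dirac, h]
  have hd : ∀ n, u.length ≤ n →
      IsDead P ((List.ofFn (fun i : Fin n => p i)).reverse) 1 0 c := by
    intro n hn
    induction n, hn using Nat.le_induction with
    | base =>
      have : (List.ofFn (fun i : Fin u.length => p i)).reverse = u := by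
        rw [List.reverse_eq_iff]
        apply List.ext_getElem
        · simp
        · intro i h1 h2
          have h3 : i < u.length := by simpa using h1
          simp [p]
      rw [this]; exact h
    | succ n hn ih =>
      have := ih.any (p n)
      rw [add_zero] at this
      rw [ofFn_rev]
      exact this
  refine ⟨pureStrat P p, ?_, ?_⟩
  · apply le_antisymm
    · exact ciSup_le fun n => reachBy_le_one P _ n
    · have hb : BddAbove (Set.range ((redPOMDP P).probReachBy (TRed S) (pureStrat P p))) :=
        ⟨1, by rintro _ ⟨n, rfl⟩; exact reachBy_le_one P _ n⟩
      refine le_trans ?_ (le_ciSup hb u.length)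
      rw [reachBy_eq _ _ _ τ hτ, W_pure p hτp]
      have h1 := (hd u.length le_rfl).1 (cur (TRed S))
      have h2 : LR P ((List.ofFn (fun i : Fin u.length => p i)).reverse) (cur (TRed S)) = 1 := by
        rw [h1]; simp [cur, TRed]
      rw [← h2]
      exact D_mono _ _ _ _ fun h => cur_le_vis _ h
  · have : (fun n => (((redPOMDP P).expTotalSteps costRed (pureStrat P p) n : ℝ) : EReal))
        =ᶠ[Filter.atTop] fun _ => (c : EReal) := by
      filter_upwards [Filter.eventually_ge_atTop u.length] with n hn
      rw [expTotal_eq _ _ _ τ hτ, W_pure p hτp]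
      exact congrArg _ (hd n hn).2
    unfold POMDP.Val
    rw [Filter.limsup_congr this]
    simp

lemma dead_of_pos {u : List (RAct A)} {c : ℝ} (h : IsPos P u [] c) :
    IsDead P (Sum.inr 2 :: u) 1 0 (c + 1) := by
  have := h.root
  have e : P.wordDist [] P.s0 = 1 := by simp [wordDist, dirac]
  rwa [e, sub_self] at this

lemma pos_word {u : List (RAct A)} {c : ℝ} (h : IsPos P u [] c) (w : List A) :
    ∃ u', IsPos P u' w c := by
  induction w using List.reverseRecOn with
  | nil => exact ⟨u, h⟩
  | append_singleton w a ih =>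
    obtain ⟨u', h'⟩ := ih
    have := h'.dollar.letter a
    rw [add_sub_cancel_right] at this
    exact ⟨_, this⟩

lemma pos_iter (w : List A) (k : ℕ) : ∃ u, IsPos P u [] (k * (1 - 2 * P.accProb w)) := by
  induction k with
  | zero => exact ⟨[], by simpa using isPos_nil P⟩
  | succ k ih =>
    obtain ⟨u, h⟩ := ih
    obtain ⟨u', h'⟩ := pos_word P h w
    have := h'.dollar.hash.hash
    refine ⟨Sum.inr 0 :: Sum.inr 0 :: Sum.inr 1 :: u', ?_⟩
    · convert this using 1
      push_cast
      ring

lemma optCost_bot (h : ∃ w : List A, 1 / 2 < P.accProb w) :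
    (redPOMDP P).optCost (TRed S) costRed = ⊥ := by
  obtain ⟨w, hw⟩ := h
  rw [EReal.eq_bot_iff_forall_lt]
  intro y
  obtain ⟨k, hk⟩ := exists_nat_gt ((1 - y) / (2 * P.accProb w - 1))
  have hpos : 0 < 2 * P.accProb w - 1 := by linarith
  rw [div_lt_iff₀ hpos] at hk
  obtain ⟨u, hu⟩ := pos_iter P w k
  obtain ⟨σ, hσ, hv⟩ := exists_strategy P (dead_of_pos P hu)
  refine lt_of_le_of_lt (iInf_le _ (⟨σ, hσ⟩ : {σ // (redPOMDP P).AlmostSure (TRed S) σ})) ?_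
  change (redPOMDP P).Val costRed σ < _
  rw [hv, EReal.coe_lt_coe_iff]
  linarith

lemma optCost_one (h : ¬ ∃ w : List A, 1 / 2 < P.accProb w) :
    (redPOMDP P).optCost (TRed S) costRed = 1 := by
  push Not at h
  apply le_antisymm
  · obtain ⟨σ, hσ, hv⟩ := exists_strategy P (dead_of_pos P (isPos_nil P))
    refine le_trans (iInf_le _ (⟨σ, hσ⟩ : {σ // (redPOMDP P).AlmostSure (TRed S) σ})) ?_
    change (redPOMDP P).Val costRed σ ≤ _
    rw [hv]
    simp
  · exact le_iInf fun σ => one_le_val P h σ.1 σ.2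

end red

end RedAux

/-- The dichotomy for the reduction POMDP: the optimal cost is
`-∞` if some word is accepted with probability `> 1/2`, and `1` otherwise;
in particular it always lies in `{-∞, 1}`. -/
theorem optCost_dichotomy
    {S A : Type} [Fintype S] [Fintype A] [DecidableEq S] [DecidableEq A]
    (P : PFA S A) :
    ((∃ w : List A, 1 / 2 < P.accProb w) →
      (PFA.redPOMDP P).optCost (PFA.TRed S) PFA.costRed = ⊥) ∧
    ((¬ ∃ w : List A, 1 / 2 < P.accProb w) →
      (PFA.redPOMDP P).optCost (PFA.TRed S) PFA.costRed = (1 : EReal)) ∧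
    (PFA.redPOMDP P).optCost (PFA.TRed S) PFA.costRed ∈ ({⊥, 1} : Set EReal) := by
  refine ⟨RedAux.optCost_bot P, RedAux.optCost_one P, ?_⟩
  by_cases h : ∃ w : List A, 1 / 2 < P.accProb w
  · exact Or.inl (RedAux.optCost_bot P h)
  · exact Or.inr (RedAux.optCost_one P h)
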